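/- arXiv:math-ph/0303039 — 2 statements merged into one kernel-verified Lean document; each statement's English description precedes it below -/
import Mathlib

section
/- Let P be an admissible polynomial and let λ₀ < 0 be a real number with λ₀²P(λ₀)² = R(λ₀). Then λ₀ lies in one of the open gaps (E_{2k}, E_{2k−1}), k = 1, …, m. In particular no such λ₀ lies in the closed segments [E_1, 0), [E_3, E_2], …, [E_{2m−1}, E_{2m−2}], or in (−∞, E_{2m}], and an admissible polynomial does not vanish at any of the real branch points E_1, …, E_{2m}. -/
/-!
If `lam0` is one of `E 1, …, E (2m)` and `λ²P² = R` there, then `P` vanishes at `lam0`, so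
`(λ - lam0)²` divides `λ²P²`. By admissibility it also divides `Q_P`, hence it divides `R`, which is
impossible because `R` has distinct roots. This is `eval_ne_zero_of_branch`.

Away from the real branch points, pair the factors of `R` as
`R(λ) = λ ∏ (λ - E (2j-1)) (λ - E (2j))`. For real `λ` outside all the closed gaps every pair is
positive: a real pair because `λ` lies on one side of both points, a conjugate pair because it is
`|λ - E (2j-1)|²`. So `R(λ) < 0` for `λ < 0` outside the closed gaps (`Rre_neg`), whereas
`λ²P(λ)² ≥ 0`. The claims about the closed segments follow from the ordering of the real branch
points.
-/

open Polynomial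

noncomputable section

/-- Branch point data for the real periodic Sine-Gordon spectral curve:
`E 0 = 0`, the points `E 1, …, E (2*g)` are pairwise distinct and distinct from `0`,
`E 1, …, E (2*m)` are real with `0 > E 1 > E 2 > … > E (2*m)`, and for `m < j ≤ g`
the branch points `E (2*j-1)`, `E (2*j)` are non-real complex conjugates. -/
structure BranchData (g m : ℕ) : Type where
  E : ℕ → ℂ
  hg : 1 ≤ g
  hm : 1 ≤ m
  hmg : m ≤ g
  hE0 : E 0 = 0
  hinj : Set.InjOn E (Set.Iic (2 * g))
  hreal : ∀ k, 1 ≤ k → k ≤ 2 * m → (E k).im = 0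
  hneg : ∀ k, 1 ≤ k → k ≤ 2 * m → (E k).re < 0
  hdec : ∀ k, 1 ≤ k → k + 1 ≤ 2 * m → (E (k + 1)).re < (E k).re
  hcomplex : ∀ j, m < j → j ≤ g → (E (2 * j - 1)).im ≠ 0
  hconj : ∀ j, m < j → j ≤ g → E (2 * j) = starRingEnd ℂ (E (2 * j - 1))

/-- `R(λ) = ∏_{k=0}^{2g} (λ - E k)`, a monic polynomial of degree `2g+1`. -/
def Rpoly (g : ℕ) (E : ℕ → ℂ) : Polynomial ℂ :=
  ∏ k ∈ Finset.range (2 * g + 1), (X - C (E k))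

/-- The restriction of `R` to the real line (real-valued thanks to the symmetry of the
branch points). -/
def Rre (g : ℕ) (E : ℕ → ℂ) (x : ℝ) : ℝ := ((Rpoly g E).eval (x : ℂ)).re

/-- `Q_P(λ) = λ² P(λ)² - R(λ)`. -/
def Qpoly (g : ℕ) (E : ℕ → ℂ) (P : Polynomial ℝ) : Polynomial ℂ :=
  X ^ 2 * (P.map (algebraMap ℝ ℂ)) ^ 2 - Rpoly g E

/-- A real polynomial `P` (of degree at most `g-1`) is admissible if every nonzero real
root of `Q_P(λ) = λ²P(λ)² - R(λ)` has even multiplicity. -/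
def Admissible (g : ℕ) (E : ℕ → ℂ) (P : Polynomial ℝ) : Prop :=
  ∀ x : ℝ, x ≠ 0 → (Qpoly g E P).IsRoot (x : ℂ) →
    Even ((Qpoly g E P).rootMultiplicity (x : ℂ))

/-- A vector of signs `s k = ±1`, `k = 1, …, m`. -/
def SignVec (m : ℕ) (s : ℕ → ℝ) : Prop :=
  ∀ k, 1 ≤ k → k ≤ m → s k = 1 ∨ s k = -1

/-- `P` has topological type `s = (s 1, …, s m)` if for each `k = 1, …, m` and every `λ`
in the gap `[E (2k), E (2k-1)]` one has `s k · P(λ) ≥ √(R(λ))/(-λ)`. -/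
def HasType (g m : ℕ) (E : ℕ → ℂ) (P : Polynomial ℝ) (s : ℕ → ℝ) : Prop :=
  ∀ k, 1 ≤ k → k ≤ m → ∀ lam : ℝ, (E (2 * k)).re ≤ lam → lam ≤ (E (2 * k - 1)).re →
    Real.sqrt (Rre g E lam) / (-lam) ≤ s k * P.eval lam

lemma Rpoly_eval_pairs (g : ℕ) (E : ℕ → ℂ) (x : ℂ) :
    (Rpoly g E).eval x =
      (x - E 0) * ∏ j ∈ Finset.range g, ((x - E (2 * j + 1)) * (x - E (2 * j + 2))) := by
  induction g with
  | zero => simp [Rpoly]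
  | succ n ih =>
    have h : Rpoly (n + 1) E =
        Rpoly n E * (X - C (E (2 * n + 1))) * (X - C (E (2 * n + 2))) := by
      unfold Rpoly
      rw [show 2 * (n + 1) + 1 = 2 * n + 1 + 1 + 1 by ring, Finset.prod_range_succ,
        Finset.prod_range_succ]
    rw [h, eval_mul, eval_mul, ih, Finset.prod_range_succ]
    simp only [eval_sub, eval_X, eval_C]
    ring

lemma Rpoly_squarefree {g m : ℕ} (D : BranchData g m) : Squarefree (Rpoly g D.E) := by
  refine (separable_prod_X_sub_C_iff'.2 fun x hx y hy h => ?_).squarefree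
  simp only [Finset.mem_range] at hx hy
  exact D.hinj (Set.mem_Iic.2 (by lia)) (Set.mem_Iic.2 (by lia)) h

lemma BranchData.ofReal_re {g m : ℕ} (D : BranchData g m) {k : ℕ} (h1 : 1 ≤ k)
    (h2 : k ≤ 2 * m) : (((D.E k).re : ℝ) : ℂ) = D.E k :=
  Complex.ext (by simp) (by simp [D.hreal k h1 h2])

lemma BranchData.re_anti {g m : ℕ} (D : BranchData g m) {i j : ℕ} (h1 : 1 ≤ i) (hij : i ≤ j)
    (h2 : j ≤ 2 * m) : (D.E j).re ≤ (D.E i).re := by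
  induction j, hij using Nat.le_induction with
  | base => exact le_rfl
  | succ n hn ih => exact (D.hdec n (by lia) h2).le.trans (ih (by lia))

/-- A common zero `E k` of `P` and `R` would be a simple root of `Q_P`, which admissibility excludes. -/
lemma eval_ne_zero_of_branch {g m : ℕ} (D : BranchData g m) (P : ℝ[X])
    (hadm : Admissible g D.E P) {k : ℕ} (h1 : 1 ≤ k) (h2 : k ≤ 2 * m) :
    P.eval (D.E k).re ≠ 0 := by
  intro h0
  have hc := D.ofReal_re h1 h2
  set x := (D.E k).re with hx
  have hdP : (X - C (x : ℂ)) ∣ P.map (algebraMap ℝ ℂ) := by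
    rw [dvd_iff_isRoot, IsRoot.def]
    have := eval_map_apply (algebraMap ℝ ℂ) (p := P) x
    rw [h0, map_zero] at this
    exact this
  have hR : (X - C (x : ℂ)) ∣ Rpoly g D.E := by
    rw [hc]
    exact Finset.dvd_prod_of_mem (fun k => X - C (D.E k))
      (Finset.mem_range.2 (by have := D.hmg; lia))
  have hsq : (X - C (x : ℂ)) ^ 2 ∣ X ^ 2 * (P.map (algebraMap ℝ ℂ)) ^ 2 :=
    (pow_dvd_pow_of_dvd hdP 2).mul_left _
  have hQ : (Qpoly g D.E P).IsRoot (x : ℂ) :=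
    dvd_iff_isRoot.1 (dvd_sub ((dvd_pow_self _ two_ne_zero).trans hsq) hR)
  have hev := hadm x (D.hneg k h1 h2).ne hQ
  have hQ2 : (X - C (x : ℂ)) ^ 2 ∣ Qpoly g D.E P := by
    -- The root multiplicity of the zero polynomial is `0`, hence the separate case.
    by_cases hz : Qpoly g D.E P = 0
    · rw [hz]; exact dvd_zero _
    · rw [← le_rootMultiplicity_iff hz]
      have := (rootMultiplicity_pos hz).2 hQ
      obtain ⟨r, hr⟩ := hev
      lia
  have hR2 : (X - C (x : ℂ)) ^ 2 ∣ Rpoly g D.E := by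
    have := dvd_sub hsq hQ2
    rwa [Qpoly, sub_sub_cancel] at this
  rw [pow_two] at hR2
  exact not_isUnit_X_sub_C _ (Rpoly_squarefree D _ hR2)

/-- `R` is negative on the negative half-line outside the closed gaps. -/
lemma Rre_neg {g m : ℕ} (D : BranchData g m) {x : ℝ} (hx : x < 0)
    (hout : ∀ k, 1 ≤ k → k ≤ m → x < (D.E (2 * k)).re ∨ (D.E (2 * k - 1)).re < x) :
    Rre g D.E x < 0 := by
  have key : ∀ j, ∃ c : ℝ, 0 < c ∧
      (j < g → ((x : ℂ) - D.E (2 * j + 1)) * ((x : ℂ) - D.E (2 * j + 2)) = c) := by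
    intro j
    by_cases hj : j < g
    swap
    · exact ⟨1, one_pos, fun h => absurd h hj⟩
    by_cases hjm : j < m
    · refine ⟨(x - (D.E (2 * j + 1)).re) * (x - (D.E (2 * j + 2)).re), ?_, fun _ => ?_⟩
      · have hd := D.hdec (2 * j + 1) (by lia) (by lia)
        rcases hout (j + 1) (by lia) (by lia) with h | h
        · rw [show 2 * (j + 1) = 2 * j + 2 by ring] at h
          exact mul_pos_of_neg_of_neg (by linarith) (by linarith)
        · rw [show 2 * (j + 1) - 1 = 2 * j + 1 by lia] at h
          exact mul_pos (by linarith) (by linarith)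
      · push_cast
        rw [D.ofReal_re (k := 2 * j + 1) (by lia) (by lia),
          D.ofReal_re (k := 2 * j + 2) (by lia) (by lia)]
    · refine ⟨Complex.normSq ((x : ℂ) - D.E (2 * j + 1)), ?_, fun _ => ?_⟩
      · rw [Complex.normSq_pos]
        intro h
        apply D.hcomplex (j + 1) (by lia) (by lia)
        rw [show 2 * (j + 1) - 1 = 2 * j + 1 by lia, ← sub_eq_zero.1 h, Complex.ofReal_im]
      · have h := D.hconj (j + 1) (by lia) (by lia)
        rw [show 2 * (j + 1) - 1 = 2 * j + 1 by lia, show 2 * (j + 1) = 2 * j + 2 by ring] at h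
        rw [← Complex.mul_conj, map_sub, Complex.conj_ofReal, h]
  choose c hc0 hc using key
  have h : (Rpoly g D.E).eval (x : ℂ) = ((x * ∏ j ∈ Finset.range g, c j : ℝ) : ℂ) := by
    rw [Rpoly_eval_pairs, D.hE0, sub_zero, Finset.prod_congr rfl
      (fun j hj => hc j (Finset.mem_range.1 hj))]
    push_cast
    rfl
  rw [Rre, h, Complex.ofReal_re]
  exact mul_neg_of_neg_of_pos hx (Finset.prod_pos fun j _ => hc0 j)

lemma Rre_branch {g m : ℕ} (D : BranchData g m) {k : ℕ} (h1 : 1 ≤ k) (h2 : k ≤ 2 * m) :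
    Rre g D.E (D.E k).re = 0 := by
  have : (Rpoly g D.E).eval (D.E k) = 0 := by
    rw [← IsRoot.def, ← dvd_iff_isRoot]
    exact Finset.dvd_prod_of_mem (fun k => X - C (D.E k))
      (Finset.mem_range.2 (by have := D.hmg; lia))
  rw [Rre, D.ofReal_re h1 h2, this, Complex.zero_re]

/-- Let `P` be admissible and let `λ₀ < 0` be real with `λ₀²P(λ₀)² = R(λ₀)`.
Then `λ₀` lies in one of the open gaps `(E (2k), E (2k-1))`, `1 ≤ k ≤ m`. In particular
no such `λ₀` lies in `[E 1, 0)`, in `[E (2k+1), E (2k)]` for `1 ≤ k ≤ m-1`, or in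
`(-∞, E (2m)]`, and an admissible polynomial does not vanish at any of the real branch
points `E 1, …, E (2m)`. -/
theorem statement6 (g m : ℕ) (D : BranchData g m) (P : Polynomial ℝ)
    (hdeg : P.natDegree ≤ g - 1) (hadm : Admissible g D.E P) :
    (∀ lam0 : ℝ, lam0 < 0 → lam0 ^ 2 * (P.eval lam0) ^ 2 = Rre g D.E lam0 →
      ∃ k, 1 ≤ k ∧ k ≤ m ∧ (D.E (2 * k)).re < lam0 ∧ lam0 < (D.E (2 * k - 1)).re) ∧
    (∀ lam0 : ℝ, lam0 < 0 → lam0 ^ 2 * (P.eval lam0) ^ 2 = Rre g D.E lam0 →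
      ¬((D.E 1).re ≤ lam0 ∨
        (∃ k, 1 ≤ k ∧ k ≤ m - 1 ∧ (D.E (2 * k + 1)).re ≤ lam0 ∧ lam0 ≤ (D.E (2 * k)).re) ∨
        lam0 ≤ (D.E (2 * m)).re)) ∧
    (∀ k, 1 ≤ k → k ≤ 2 * m → P.eval (D.E k).re ≠ 0) := by
  have hbr : ∀ k, 1 ≤ k → k ≤ 2 * m → P.eval (D.E k).re ≠ 0 :=
    fun k h1 h2 => eval_ne_zero_of_branch D P hadm h1 h2
  have hne : ∀ x : ℝ, x < 0 → x ^ 2 * (P.eval x) ^ 2 = Rre g D.E x →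
      ∀ k, 1 ≤ k → k ≤ 2 * m → x ≠ (D.E k).re := by
    rintro x hx hR k h1 h2 rfl
    rw [Rre_branch D h1 h2] at hR
    have hP := hbr k h1 h2
    have := hx.ne
    exact absurd hR (by positivity)
  have hgap : ∀ x : ℝ, x < 0 → x ^ 2 * (P.eval x) ^ 2 = Rre g D.E x →
      ∃ k, 1 ≤ k ∧ k ≤ m ∧ (D.E (2 * k)).re < x ∧ x < (D.E (2 * k - 1)).re := by
    intro x hx hR
    by_contra! hcon
    have hneg : Rre g D.E x < 0 := by
      refine Rre_neg D hx fun k h1 h2 => ?_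
      rcases lt_or_gt_of_ne (hne x hx hR (2 * k) (by lia) (by lia)) with h | h
      · exact Or.inl h
      · exact Or.inr (lt_of_le_of_ne (hcon k h1 h2 h)
          (hne x hx hR (2 * k - 1) (by lia) (by lia)).symm)
    have : 0 ≤ x ^ 2 * (P.eval x) ^ 2 := by positivity
    linarith
  refine ⟨hgap, fun x hx hR hcase => ?_, hbr⟩
  obtain ⟨k, h1, h2, hlo, hhi⟩ := hgap x hx hR
  rcases hcase with h | ⟨j, hj1, hj2, hjlo, hjhi⟩ | h
  · have := D.re_anti (i := 1) (j := 2 * k - 1) le_rfl (by lia) (by lia)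
    linarith
  · -- The gap `k` lies below the segment `j` if `j < k`, and above it otherwise.
    rcases lt_or_ge j k with hjk | hjk
    · have := D.re_anti (i := 2 * j + 1) (j := 2 * k - 1) (by lia) (by lia) (by lia)
      linarith
    · have := D.re_anti (i := 2 * k) (j := 2 * j) (by lia) (by lia) (by lia)
      linarith
  · have := D.re_anti (i := 2 * k) (j := 2 * m) (by lia) (by lia) le_rfl
    linarith
end
end

section
/- If t ↦ P_t, t ∈ [0,1], is a path of admissible polynomials of degree at most g−1 whose coefficients depend continuously on t, then the topological type of P_t is the same for all t ∈ [0,1]. -/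
/-!
The polynomial `Q_P` has odd degree `2g+1` and leading coefficient `-1`, so it is positive near
`-∞`; since its negative roots have even multiplicity (`eval_mul_eval_nonneg`), it is nonnegative on
the whole negative half-line (`Rreal_le`). Hence `|P(λ)| ≥ √R(λ)/(-λ)` for all `λ < 0`.
Inside a gap `R > 0` (`Rreal_pos`), so `(t, λ) ↦ P_t(λ)` is a continuous function without zeros on
the connected set `[0,1] × (E_{2k}, E_{2k-1})`. Its sign there is constant, and this
sign is the `k`-th entry of the topological type. The endpoints of the gap follow by density.
-/

open Polynomial

noncomputable section

/-! ### Real polynomials with even negative roots -/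

/-- A real polynomial all of whose negative roots have even multiplicity does not change sign on the
negative half-line: divide by `(X - a)²` for a negative root `a` until there is none left. -/
lemma eval_mul_eval_nonneg (n : ℕ) : ∀ q : Polynomial ℝ, q.natDegree ≤ n → q ≠ 0 →
    (∀ x < 0, Even (q.rootMultiplicity x)) → ∀ x < 0, ∀ y < 0, 0 ≤ q.eval x * q.eval y := by
  induction n using Nat.strong_induction_on with
  | _ n ih =>
    intro q hn hq heven x hx y hy
    by_cases hroot : ∃ a < 0, q.IsRoot a
    · obtain ⟨a, ha, hqa⟩ := hroot
      have hpos : 0 < q.rootMultiplicity a := (rootMultiplicity_pos hq).2 hqa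
      have h2 : 2 ≤ q.rootMultiplicity a := by
        obtain ⟨c, hc⟩ := heven a ha
        omega
      obtain ⟨r, hr⟩ := (le_rootMultiplicity_iff hq).1 h2
      have hr0 : r ≠ 0 := by
        rintro rfl
        exact hq (by simpa using hr)
      have hX : (X - C a) ^ 2 ≠ (0 : Polynomial ℝ) := pow_ne_zero _ (X_sub_C_ne_zero a)
      have hd : q.natDegree = 2 + r.natDegree := by
        rw [hr, natDegree_mul hX hr0, natDegree_pow, natDegree_X_sub_C]
      have hrm : ∀ z < 0, Even (r.rootMultiplicity z) := by
        intro z hz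
        have h := heven z hz
        have hsq : Even (((X - C a) ^ 2 : Polynomial ℝ).rootMultiplicity z) := by
          rw [pow_two, rootMultiplicity_mul (by rw [← pow_two]; exact hX)]
          exact ⟨_, rfl⟩
        rw [hr, rootMultiplicity_mul (hr ▸ hq), Nat.even_add] at h
        exact h.1 hsq
      have := ih (r.natDegree) (by omega) r le_rfl hr0 hrm x hx y hy
      rw [hr]
      simp only [eval_mul, eval_pow, eval_sub, eval_X, eval_C]
      have e : (x - a) ^ 2 * r.eval x * ((y - a) ^ 2 * r.eval y)
          = ((x - a) * (y - a)) ^ 2 * (r.eval x * r.eval y) := by ring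
      rw [e]
      positivity
    · push Not at hroot
      by_contra! hneg
      have hpre : IsPreconnected ((fun z => q.eval z) '' Set.Iio 0) :=
        isPreconnected_Iio.image _ q.continuous.continuousOn
      have hoc := hpre.ordConnected
      have hz : (0 : ℝ) ∈ (fun z => q.eval z) '' Set.Iio 0 := by
        rcases mul_neg_iff.1 hneg with ⟨h1, h2⟩ | ⟨h1, h2⟩
        · exact hoc.out ⟨y, hy, rfl⟩ ⟨x, hx, rfl⟩ ⟨h2.le, h1.le⟩
        · exact hoc.out ⟨x, hx, rfl⟩ ⟨y, hy, rfl⟩ ⟨h1.le, h2.le⟩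
      obtain ⟨z, hz0, hz⟩ := hz
      exact hroot z hz0 hz

/-! ### The real form of `R` and its sign -/

/-- The real quadratic `(λ - E_{2j+1})(λ - E_{2j+2})`, for the pair of index `j = 0, …, g-1`. -/
def quad (E : ℕ → ℂ) (j : ℕ) : Polynomial ℝ :=
  X ^ 2 - C (E (2 * j + 1) + E (2 * j + 2)).re * X + C (E (2 * j + 1) * E (2 * j + 2)).re

/-- The real polynomial `R`, grouped into the factor `λ` and the real quadratics. -/
def Rreal (g : ℕ) (E : ℕ → ℂ) : Polynomial ℝ := (∏ j ∈ Finset.range g, quad E j) * X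

lemma prod_range_pairs (f : ℕ → Polynomial ℂ) (n : ℕ) :
    ∏ k ∈ Finset.range (2 * n), f k = ∏ j ∈ Finset.range n, f (2 * j) * f (2 * j + 1) := by
  induction n with
  | zero => simp
  | succ n ih =>
    rw [Finset.prod_range_succ, ← ih, show 2 * (n + 1) = 2 * n + 1 + 1 by ring,
      Finset.prod_range_succ, Finset.prod_range_succ, mul_assoc]

lemma quad_map {g m : ℕ} (D : BranchData g m) {j : ℕ} (hj : j < g) :
    (quad D.E j).map (algebraMap ℝ ℂ)
      = (X - C (D.E (2 * j + 1))) * (X - C (D.E (2 * j + 2))) := by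
  have him : (D.E (2 * j + 1) + D.E (2 * j + 2)).im = 0 ∧
      (D.E (2 * j + 1) * D.E (2 * j + 2)).im = 0 := by
    by_cases hjm : j < m
    · have h1 := D.hreal (2 * j + 1) (by omega) (by omega)
      have h2 := D.hreal (2 * j + 2) (by omega) (by omega)
      simp [h1, h2]
    · have h := D.hconj (j + 1) (by omega) (by omega)
      rw [show 2 * (j + 1) - 1 = 2 * j + 1 by omega, show 2 * (j + 1) = 2 * j + 2 by ring] at h
      rw [h]
      simp
      ring
  have e1 : (((D.E (2 * j + 1) + D.E (2 * j + 2)).re : ℝ) : ℂ)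
      = D.E (2 * j + 1) + D.E (2 * j + 2) := Complex.ext (by simp) (by simp [him.1.symm])
  have e2 : (((D.E (2 * j + 1) * D.E (2 * j + 2)).re : ℝ) : ℂ)
      = D.E (2 * j + 1) * D.E (2 * j + 2) :=
    Complex.ext (Complex.ofReal_re _) ((Complex.ofReal_im _).trans him.2.symm)
  unfold quad
  simp only [Polynomial.map_add, Polynomial.map_sub, Polynomial.map_mul, Polynomial.map_pow, map_X,
    map_C, Complex.coe_algebraMap]
  rw [e1, e2, C_add, C_mul]
  ring

lemma Rreal_map {g m : ℕ} (D : BranchData g m) :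
    (Rreal g D.E).map (algebraMap ℝ ℂ) = Rpoly g D.E := by
  unfold Rreal Rpoly
  rw [Finset.prod_range_succ', prod_range_pairs (fun k => X - C (D.E (k + 1))), D.hE0,
    Polynomial.map_mul, Polynomial.map_prod]
  congr 1
  · exact Finset.prod_congr rfl fun j hj => quad_map D (Finset.mem_range.1 hj)
  · simp

lemma Rre_eq {g m : ℕ} (D : BranchData g m) (x : ℝ) :
    Rre g D.E x = (Rreal g D.E).eval x := by
  unfold Rre
  rw [← Rreal_map D, show (x : ℂ) = algebraMap ℝ ℂ x from rfl, eval_map_algebraMap,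
    aeval_algebraMap_apply]
  simp

lemma quad_eval_real {g m : ℕ} (D : BranchData g m) {j : ℕ} (hj : j < m) (x : ℝ) :
    (quad D.E j).eval x = (x - (D.E (2 * j + 1)).re) * (x - (D.E (2 * j + 2)).re) := by
  have h1 := D.hreal (2 * j + 1) (by omega) (by omega)
  have h2 := D.hreal (2 * j + 2) (by omega) (by omega)
  simp [quad, h1, h2]
  ring

/-- A conjugate pair of non-real branch points gives `|x - E_{2j+1}|² > 0`. -/
lemma quad_eval_complex {g m : ℕ} (D : BranchData g m) {j : ℕ} (hj : m ≤ j) (hjg : j < g)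
    (x : ℝ) : 0 < (quad D.E j).eval x := by
  have h := D.hconj (j + 1) (by omega) (by omega)
  have hc := D.hcomplex (j + 1) (by omega) (by omega)
  rw [show 2 * (j + 1) - 1 = 2 * j + 1 by omega] at h hc
  rw [show 2 * (j + 1) = 2 * j + 2 by ring] at h
  have e : (quad D.E j).eval x
      = (x - (D.E (2 * j + 1)).re) ^ 2 + (D.E (2 * j + 1)).im ^ 2 := by
    simp [quad, h]
    ring
  rw [e]
  positivity

lemma E_re_anti {g m : ℕ} (D : BranchData g m) {a b : ℕ} (ha : 1 ≤ a) (hab : a ≤ b)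
    (hb : b ≤ 2 * m) : (D.E b).re ≤ (D.E a).re := by
  induction b, hab using Nat.le_induction with
  | base => exact le_rfl
  | succ n hn ih => exact (D.hdec n (by omega) hb).le.trans (ih (by omega))

lemma Rreal_pos {g m : ℕ} (D : BranchData g m) {k : ℕ} (hk : k < m) {x : ℝ}
    (h1 : (D.E (2 * k + 2)).re < x) (h2 : x < (D.E (2 * k + 1)).re) :
    0 < (Rreal g D.E).eval x := by
  have hx : x < 0 := h2.trans (D.hneg _ (by omega) (by omega))
  have hkg : k ∈ Finset.range g := Finset.mem_range.2 (hk.trans_le D.hmg)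
  have hk_neg : (quad D.E k).eval x < 0 := by
    rw [quad_eval_real D hk]
    exact mul_neg_of_neg_of_pos (by linarith) (by linarith)
  have hrest : 0 < ∏ j ∈ (Finset.range g).erase k, (quad D.E j).eval x := by
    refine Finset.prod_pos fun j hj => ?_
    obtain ⟨hjk, hjg⟩ := Finset.mem_erase.1 hj
    by_cases hjm : j < m
    · rw [quad_eval_real D hjm]
      rcases lt_or_gt_of_ne hjk with h | h
      · have a1 := E_re_anti D (a := 2 * j + 1) (b := 2 * k + 1) (by omega) (by omega) (by omega)
        have a2 := E_re_anti D (a := 2 * j + 2) (b := 2 * k + 1) (by omega) (by omega) (by omega)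
        exact mul_pos_of_neg_of_neg (by linarith) (by linarith)
      · have a1 := E_re_anti D (a := 2 * k + 2) (b := 2 * j + 1) (by omega) (by omega) (by omega)
        have a2 := E_re_anti D (a := 2 * k + 2) (b := 2 * j + 2) (by omega) (by omega) (by omega)
        exact mul_pos (by linarith) (by linarith)
    · exact quad_eval_complex D (not_lt.1 hjm) (Finset.mem_range.1 hjg) x
  unfold Rreal
  rw [eval_mul, eval_X, eval_prod, ← Finset.mul_prod_erase _ _ hkg]
  exact mul_pos_of_neg_of_neg (mul_neg_of_neg_of_pos hk_neg hrest) hx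

lemma Rreal_monic {g m : ℕ} (D : BranchData g m) : (Rreal g D.E).Monic := by
  refine monic_of_injective (algebraMap ℝ ℂ).injective ?_
  rw [Rreal_map D]
  exact monic_prod_of_monic _ _ fun k _ => monic_X_sub_C _

lemma Rreal_natDegree {g m : ℕ} (D : BranchData g m) :
    (Rreal g D.E).natDegree = 2 * g + 1 := by
  rw [← natDegree_map (algebraMap ℝ ℂ), Rreal_map D]
  unfold Rpoly
  rw [natDegree_prod_of_monic _ _ fun k _ => monic_X_sub_C _]
  simp

/-! ### The inequality for admissible polynomials -/

/-- For an admissible `P`, `R ≤ λ² P²` on the negative half-line. -/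
lemma Rreal_le {g m : ℕ} (D : BranchData g m) {P : Polynomial ℝ} (hP : P.natDegree ≤ g - 1)
    (hadm : Admissible g D.E P) {x : ℝ} (hx : x < 0) :
    (Rreal g D.E).eval x ≤ x ^ 2 * (P.eval x) ^ 2 := by
  set S : Polynomial ℝ := X ^ 2 * P ^ 2 with hS
  set q : Polynomial ℝ := S - Rreal g D.E with hq
  have hqmap : q.map (algebraMap ℝ ℂ) = Qpoly g D.E P := by
    simp [hq, hS, Qpoly, Rreal_map D]
  have hg := D.hg
  have hSdeg : S.natDegree < 2 * g + 1 := by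
    have h1 : S.natDegree ≤ _ := natDegree_mul_le
    have h2 : (P ^ 2).natDegree ≤ _ := natDegree_pow_le
    rw [natDegree_X_pow] at h1
    omega
  -- The degree is odd, so `Q(-x)` has leading coefficient `+1` and tends to `+∞` with `x`.
  set p : Polynomial ℝ := q.comp (-X) with hp
  have hqc : q.coeff (2 * g + 1) = -1 := by
    rw [hq, coeff_sub, coeff_eq_zero_of_natDegree_lt hSdeg]
    have := (Rreal_monic D).coeff_natDegree
    rw [Rreal_natDegree D] at this
    rw [this]
    norm_num
  have hqdeg : q.natDegree = 2 * g + 1 := by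
    refine le_antisymm ?_ (le_natDegree_of_ne_zero (by rw [hqc]; norm_num))
    exact (natDegree_sub_le _ _).trans (max_le hSdeg.le (Rreal_natDegree D).le)
  have hpdeg : p.natDegree = 2 * g + 1 := by
    rw [hp, natDegree_comp, natDegree_neg, natDegree_X, hqdeg, mul_one]
  have hplead : p.leadingCoeff = 1 := by
    rw [hp, leadingCoeff_comp (by simp), leadingCoeff, hqdeg, hqc, leadingCoeff_neg,
      leadingCoeff_X, Odd.neg_one_pow ⟨g, rfl⟩]
    norm_num
  have htend : Filter.Tendsto (fun x => p.eval x) Filter.atTop Filter.atTop :=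
    p.tendsto_atTop_of_leadingCoeff_nonneg
      (natDegree_pos_iff_degree_pos.1 (by omega)) (by rw [hplead]; norm_num)
  obtain ⟨y, hy0, hy⟩ :=
    ((Filter.eventually_gt_atTop 0).and (htend.eventually_gt_atTop 0)).exists
  have hqy : 0 < q.eval (-y) := by simpa [hp] using hy
  have hq0 : q ≠ 0 := by
    intro h
    simp [h] at hqy
  have hev : ∀ z < 0, Even (q.rootMultiplicity z) := by
    intro z hz
    by_cases hr : q.IsRoot z
    · have h := hadm z hz.ne (by
        rw [← hqmap]
        exact hr.map (f := algebraMap ℝ ℂ))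
      rwa [← hqmap, show (z : ℂ) = algebraMap ℝ ℂ z from rfl,
        ← eq_rootMultiplicity_map (algebraMap ℝ ℂ).injective] at h
    · rw [rootMultiplicity_eq_zero hr]
      exact Even.zero
  have h := eval_mul_eval_nonneg _ q le_rfl hq0 hev x hx (-y) (by linarith)
  have h0 : 0 ≤ q.eval x := nonneg_of_mul_nonneg_left h hqy
  simpa [hq, hS] using h0

/-! ### Invariance of the topological type -/

/-- If `t ↦ P t`, `t ∈ [0,1]`, is a path of admissible polynomials of degree
at most `g-1` whose coefficients depend continuously on `t`, then the topological type of
`P t` is the same for all `t ∈ [0,1]`. -/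
theorem statement8 (g m : ℕ) (D : BranchData g m) (P : ℝ → Polynomial ℝ)
    (hdeg : ∀ t ∈ Set.Icc (0 : ℝ) 1, (P t).natDegree ≤ g - 1)
    (hadm : ∀ t ∈ Set.Icc (0 : ℝ) 1, Admissible g D.E (P t))
    (hcont : ∀ i : ℕ, ContinuousOn (fun t => (P t).coeff i) (Set.Icc (0 : ℝ) 1)) :
    ∀ s : ℕ → ℝ, SignVec m s → ∀ t ∈ Set.Icc (0 : ℝ) 1, ∀ t' ∈ Set.Icc (0 : ℝ) 1,
      HasType g m D.E (P t) s → HasType g m D.E (P t') s := by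
  intro s hs t ht t' ht' htype k hk1 hkm
  obtain ⟨j, rfl⟩ : ∃ j, k = j + 1 := ⟨k - 1, by omega⟩
  rw [show 2 * (j + 1) - 1 = 2 * j + 1 by omega, show 2 * (j + 1) = 2 * j + 2 by ring]
  have htypek := htype (j + 1) hk1 hkm
  rw [show 2 * (j + 1) - 1 = 2 * j + 1 by omega, show 2 * (j + 1) = 2 * j + 2 by ring] at htypek
  set a := (D.E (2 * j + 2)).re with ha
  set b := (D.E (2 * j + 1)).re with hb
  have hab : a < b := D.hdec (2 * j + 1) (by omega) (by omega)
  have hb0 : b < 0 := D.hneg _ (by omega) (by omega)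
  have hg := D.hg
  let F : ℝ × ℝ → ℝ := fun z => s (j + 1) * (P z.1).eval z.2
  have hscoef : s (j + 1) ≠ 0 := by
    rcases hs _ hk1 hkm with h | h <;> rw [h] <;> norm_num
  have hFcont : ContinuousOn F (Set.Icc (0 : ℝ) 1 ×ˢ Set.Ioo a b) := by
    have hsum : ContinuousOn
        (fun z : ℝ × ℝ => s (j + 1) * ∑ i ∈ Finset.range g, (P z.1).coeff i * z.2 ^ i)
        (Set.Icc (0 : ℝ) 1 ×ˢ Set.Ioo a b) := by
      refine continuousOn_const.mul (continuousOn_finsetSum _ fun i _ => ?_)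
      exact ((hcont i).comp continuousOn_fst fun z hz => hz.1).mul (continuousOn_snd.pow i)
    refine hsum.congr fun z hz => ?_
    have := hdeg z.1 hz.1
    simp only [F]
    rw [eval_eq_sum_range' (n := g) (by omega)]
  have hFne : ∀ z ∈ Set.Icc (0 : ℝ) 1 ×ˢ Set.Ioo a b, F z ≠ 0 := by
    rintro ⟨u, x⟩ ⟨hu, hx⟩ h0
    have hpos := Rreal_pos D (show j < m by omega) hx.1 hx.2
    have hle := Rreal_le D (hdeg u hu) (hadm u hu) (hx.2.trans hb0)
    have hP0 : (P u).eval x = 0 := (mul_eq_zero.1 h0).resolve_left hscoef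
    rw [hP0] at hle
    simp only [ne_eq, OfNat.ofNat_ne_zero, not_false_eq_true, zero_pow, mul_zero] at hle
    exact absurd hpos (not_lt.2 hle)
  have hpre : IsPreconnected (Set.Icc (0 : ℝ) 1 ×ˢ Set.Ioo a b) :=
    isPreconnected_Icc.prod isPreconnected_Ioo
  have hFt : ∀ x ∈ Set.Ioo a b, 0 < F (t, x) := by
    intro x hx
    refine lt_of_le_of_ne ?_ (hFne (t, x) ⟨ht, hx⟩).symm
    refine le_trans ?_ (htypek x hx.1.le hx.2.le)
    exact div_nonneg (Real.sqrt_nonneg _) (by linarith [hx.2])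
  have hFt' : ∀ x ∈ Set.Ioo a b, 0 < F (t', x) := by
    intro x hx
    by_contra! hle
    obtain ⟨z, hz, hz0⟩ := (hpre.image F hFcont).ordConnected.out
      ⟨(t', x), ⟨ht', hx⟩, rfl⟩ ⟨(t, x), ⟨ht, hx⟩, rfl⟩ ⟨hle, (hFt x hx).le⟩
    exact hFne z hz hz0
  have hclosed : ∀ x ∈ Set.Icc a b, 0 ≤ s (j + 1) * (P t').eval x := by
    intro x hx
    rw [← closure_Ioo hab.ne] at hx
    have hcl : IsClosed {y : ℝ | 0 ≤ s (j + 1) * (P t').eval y} :=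
      isClosed_le continuous_const (continuous_const.mul (P t').continuous)
    exact closure_minimal (fun y hy => (hFt' y hy).le) hcl hx
  intro x hxa hxb
  have hx0 : x < 0 := hxb.trans_lt hb0
  rw [div_le_iff₀ (by linarith), Rre_eq D]
  refine Real.sqrt_le_iff.2 ⟨mul_nonneg (hclosed x ⟨hxa, hxb⟩) (by linarith), ?_⟩
  have hle := Rreal_le D (hdeg t' ht') (hadm t' ht') hx0
  have hs2 : s (j + 1) ^ 2 = 1 := by
    rcases hs _ hk1 hkm with h | h <;> rw [h] <;> norm_num
  calc (Rreal g D.E).eval x ≤ x ^ 2 * (P t').eval x ^ 2 := hle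
    _ = s (j + 1) ^ 2 * (x ^ 2 * (P t').eval x ^ 2) := by rw [hs2, one_mul]
    _ = (s (j + 1) * (P t').eval x * -x) ^ 2 := by ring
end
end
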